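/- Strong duality holds in the following form: the supremum of T(ρ, a) over all positive operators ρ on H that are supported on a finite set and satisfy d_j(ρ) = 1/r for every j ∈ {1,…,r} equals the infimum of λ_max(a + ζ_1 I_1 + ⋯ + ζ_r I_r) over all ζ ∈ ℝ^r with ζ_1 + ⋯ + ζ_r = 0. (Both sets of values are nonempty, the first is bounded above by ‖a‖ and the second is bounded below by −‖a‖, so both the supremum and the infimum are finite real numbers.) -/

import Mathlib

/-!
Weak duality: pairing a feasible `ρ` with `a + ∑ ζ_j I_j` gives `T(ρ, a)`, because
`T(ρ, I_j) = d_j(ρ) = 1/r` and `∑ ζ_j = 0`; writing `ρ` as a finite sum of rank-one operators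
through its square root (`Adm.exists_vectors`) bounds this by `λ_max` times the trace `1`
(`weak_duality`).

For the converse, let `p` be the primal supremum and `q > p`. The pairs `((d_j(ρ))_j, T(ρ, a))`,
with `ρ` positive and finitely supported, form a convex set in `ℝ^r × ℝ`. The point
`(1/r, …, 1/r, q)` is not even in its closure: a `ρ` whose partial traces are almost `1/r` becomes
feasible after slightly shrinking it and adding a small diagonal operator, at a small cost in value
(`near_feasible`). Here it matters that every part `V_j` is nonempty. Hahn–Banach separation in
finite dimension then gives a functional; its last coefficient is positive since feasible operators
exist, and after normalization its other coefficients form a `ζ` of sum zero. Evaluating it on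
rank-one operators bounds the quadratic form of `a + ∑ ζ_j I_j` by `q` on finitely supported
vectors, hence everywhere by density (`lamMax_le`), so the dual infimum is at most `q`
(`exists_dual`).
-/

open scoped ComplexInnerProductSpace ComplexOrder

noncomputable section

/-- The Hilbert space `ℓ²(V; ℂ)`. -/
abbrev Hs (V : Type) : Type := lp (fun _ : V => ℂ) 2

/-- The standard orthonormal basis vector `e_v` of `ℓ²(V; ℂ)`. -/
def bas (V : Type) (v : V) : Hs V :=
  letI := Classical.decEq V
  lp.single 2 v 1

/-- `d_j(ρ) = ∑_{v ∈ V_j} Re ⟪e_v, ρ e_v⟫` (only finitely many nonzero terms for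
finitely-supported `ρ`). -/
def dPart {V : Type} {r : ℕ} (g : V → Fin r) (ρ : Hs V →L[ℂ] Hs V) (j : Fin r) : ℝ :=
  ∑' v : V, if g v = j then (⟪bas V v, ρ (bas V v)⟫).re else 0

/-- `T(ρ, b) = ∑_{v ∈ V} Re ⟪e_v, ρ (b e_v)⟫`, the trace of `ρ b`. -/
def TT {V : Type} (ρ b : Hs V →L[ℂ] Hs V) : ℝ :=
  ∑' v : V, (⟪bas V v, ρ (b (bas V v))⟫).re

/-- `λ_max(b) = sup { Re ⟪x, b x⟫ : ‖x‖ = 1 }`. -/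
def lamMax {V : Type} (b : Hs V →L[ℂ] Hs V) : ℝ :=
  sSup {t : ℝ | ∃ x : Hs V, ‖x‖ = 1 ∧ t = (⟪x, b x⟫).re}

/-! ### The standard basis -/

lemma inner_bas {V : Type} (v : V) (x : Hs V) : ⟪bas V v, x⟫ = x v := by
  classical
  unfold bas
  rw [lp.inner_single_left]
  simp

lemma bas_apply {V : Type} [DecidableEq V] (v w : V) :
    (bas V v : Hs V) w = if v = w then 1 else 0 := by
  unfold bas
  by_cases h : v = w
  · subst h; simp
  · simp [h, Ne.symm h]

lemma norm_bas {V : Type} (v : V) : ‖bas V v‖ = 1 := by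
  classical
  have h : ⟪bas V v, bas V v⟫ = (1 : ℂ) := by rw [inner_bas, bas_apply]; simp
  rw [inner_self_eq_norm_sq_to_K] at h
  have h2 : ‖bas V v‖ ^ 2 = 1 := by
    rw [RCLike.ofReal_eq_complex_ofReal] at h
    exact_mod_cast h
  nlinarith [norm_nonneg (bas V v)]

lemma eq_sum_bas {V : Type} (F : Finset V) (x : Hs V) (hx : ∀ v ∉ F, x v = 0) :
    x = ∑ v ∈ F, x v • bas V v := by
  classical
  ext w
  rw [lp.coeFn_sum, Finset.sum_apply]
  simp only [lp.coeFn_smul, Pi.smul_apply, bas_apply, smul_eq_mul, mul_ite, mul_one, mul_zero,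
    Finset.sum_ite_eq']
  split_ifs with h
  · rfl
  · exact hx w h

lemma hasSum_bas {V : Type} (x : Hs V) : HasSum (fun v => x v • bas V v) x := by
  classical
  have h := lp.hasSum_single (p := 2) (by simp) x
  convert h using 2 with v
  ext w
  rw [lp.coeFn_smul, Pi.smul_apply, bas_apply, lp.single_apply]
  by_cases h : v = w
  · subst h; simp
  · simp [h, Ne.symm h]

/-! ### Finitely supported positive operators -/

/-- `ρ` is a positive operator supported on the finite set `F`. -/
def Adm {V : Type} (ρ : Hs V →L[ℂ] Hs V) (F : Finset V) : Prop :=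
  (∀ x : Hs V, 0 ≤ ⟪x, ρ x⟫) ∧ ∀ v ∉ F, ρ (bas V v) = 0

lemma Adm.mono {V : Type} {ρ : Hs V →L[ℂ] Hs V} {F G : Finset V} (h : Adm ρ F) (hFG : F ⊆ G) :
    Adm ρ G := ⟨h.1, fun v hv => h.2 v fun hv' => hv (hFG hv')⟩

lemma Adm.isPositive {V : Type} {ρ : Hs V →L[ℂ] Hs V} {F : Finset V} (h : Adm ρ F) :
    ρ.IsPositive := by
  rw [ContinuousLinearMap.isPositive_iff_complex]
  intro x
  have hx := h.1 x
  rw [Complex.nonneg_iff] at hx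
  rw [← inner_conj_symm]
  refine ⟨?_, hx.1⟩
  apply Complex.ext
  · simp only [RCLike.re_to_complex, Complex.conj_re, Complex.ofReal_re]
  · rw [Complex.conj_im, ← hx.2]
    simp

lemma Adm.inner_symm {V : Type} {ρ : Hs V →L[ℂ] Hs V} {F : Finset V} (h : Adm ρ F) (x y : Hs V) :
    ⟪ρ x, y⟫ = ⟪x, ρ y⟫ :=
  ((ContinuousLinearMap.isPositive_iff ρ).1 h.isPositive).1 x y

lemma Adm.add {V : Type} {ρ σ : Hs V →L[ℂ] Hs V} {F : Finset V} (h : Adm ρ F) (h' : Adm σ F) :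
    Adm (ρ + σ) F := by
  refine ⟨fun x => ?_, fun v hv => ?_⟩
  · simpa [inner_add_right] using add_nonneg (h.1 x) (h'.1 x)
  · simp [h.2 v hv, h'.2 v hv]

lemma Adm.smul {V : Type} {ρ : Hs V →L[ℂ] Hs V} {F : Finset V} (h : Adm ρ F) {c : ℝ}
    (hc : 0 ≤ c) : Adm ((c : ℂ) • ρ) F := by
  refine ⟨fun x => ?_, fun v hv => ?_⟩
  · have : (0 : ℂ) ≤ c := by exact_mod_cast hc
    rw [_root_.smul_apply, inner_smul_right]
    exact mul_nonneg this (h.1 x)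
  · rw [_root_.smul_apply, h.2 v hv, smul_zero]

lemma Adm.sum {V ι : Type} (s : Finset ι) {ρ : ι → Hs V →L[ℂ] Hs V} {F : Finset V}
    (h : ∀ i ∈ s, Adm (ρ i) F) : Adm (∑ i ∈ s, ρ i) F := by
  refine ⟨fun x => ?_, fun v hv => ?_⟩
  · rw [_root_.sum_apply, inner_sum]
    exact Finset.sum_nonneg fun i hi => (h i hi).1 x
  · rw [_root_.sum_apply]
    exact Finset.sum_eq_zero fun i hi => (h i hi).2 v hv

lemma Adm.rankOne {V : Type} {F : Finset V} {y : Hs V} (hy : ∀ v ∉ F, y v = 0) :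
    Adm (InnerProductSpace.rankOne ℂ y y) F := by
  refine ⟨fun x => ?_, fun v hv => ?_⟩
  · rw [InnerProductSpace.rankOne_apply, inner_smul_right, ← inner_conj_symm, mul_comm]
    exact mul_star_self_nonneg _
  · rw [InnerProductSpace.rankOne_apply, ← inner_conj_symm, inner_bas, hy v hv]
    simp

/-! ### The trace pairing and the partial traces -/

lemma TT_eq {V : Type} {ρ : Hs V →L[ℂ] Hs V} {F : Finset V} (h : Adm ρ F)
    (b : Hs V →L[ℂ] Hs V) : TT ρ b = ∑ v ∈ F, (⟪bas V v, ρ (b (bas V v))⟫).re := by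
  refine tsum_eq_sum fun v hv => ?_
  rw [← h.inner_symm, h.2 v hv]
  simp

lemma dPart_eq {V : Type} {r : ℕ} (g : V → Fin r) {ρ : Hs V →L[ℂ] Hs V} {F : Finset V}
    (h : Adm ρ F) (j : Fin r) :
    dPart g ρ j = ∑ v ∈ F, if g v = j then (⟪bas V v, ρ (bas V v)⟫).re else 0 := by
  refine tsum_eq_sum fun v hv => ?_
  rw [h.2 v hv]
  simp

/-- The partial trace `d_j(ρ)` is the trace pairing of `ρ` with the projection `I_j`. -/
lemma dPart_eq_TT {V : Type} {r : ℕ} {g : V → Fin r} {I : Fin r → (Hs V →L[ℂ] Hs V)}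
    (hI : ∀ (j : Fin r) (v : V), I j (bas V v) = if g v = j then bas V v else 0)
    (ρ : Hs V →L[ℂ] Hs V) (j : Fin r) :
    dPart g ρ j = TT ρ (I j) := by
  unfold dPart TT
  congr 1
  ext v
  rw [hI]
  split_ifs <;> simp

lemma TT_add_left {V : Type} {ρ σ : Hs V →L[ℂ] Hs V} {F : Finset V} (h : Adm ρ F)
    (h' : Adm σ F) (b : Hs V →L[ℂ] Hs V) : TT (ρ + σ) b = TT ρ b + TT σ b := by
  rw [TT_eq h, TT_eq h', TT_eq (h.add h'), ← Finset.sum_add_distrib]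
  simp

lemma TT_smul_left {V : Type} (ρ : Hs V →L[ℂ] Hs V) (c : ℝ) (b : Hs V →L[ℂ] Hs V) :
    TT ((c : ℂ) • ρ) b = c * TT ρ b := by
  unfold TT
  rw [← tsum_mul_left]
  congr 1
  ext v
  rw [_root_.smul_apply, inner_smul_right, Complex.re_ofReal_mul]

lemma TT_sum_left {V ι : Type} (s : Finset ι) {ρ : ι → Hs V →L[ℂ] Hs V} {F : Finset V}
    (h : ∀ i ∈ s, Adm (ρ i) F) (b : Hs V →L[ℂ] Hs V) :
    TT (∑ i ∈ s, ρ i) b = ∑ i ∈ s, TT (ρ i) b := by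
  rw [TT_eq (Adm.sum s h), Finset.sum_congr rfl fun i hi => TT_eq (h i hi) b, Finset.sum_comm]
  simp [Complex.re_sum]

lemma TT_combination {V : Type} {r : ℕ} {ρ : Hs V →L[ℂ] Hs V} {F : Finset V} (h : Adm ρ F)
    (a : Hs V →L[ℂ] Hs V) (I : Fin r → (Hs V →L[ℂ] Hs V)) (ζ : Fin r → ℝ) :
    TT ρ (a + ∑ j : Fin r, (ζ j : ℂ) • I j) = TT ρ a + ∑ j, ζ j * TT ρ (I j) := by
  simp only [TT_eq h, Finset.mul_sum]
  rw [Finset.sum_comm, ← Finset.sum_add_distrib]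
  refine Finset.sum_congr rfl fun v _ => ?_
  rw [_root_.add_apply, _root_.sum_apply, map_add, map_sum, inner_add_right,
    inner_sum, Complex.add_re, Complex.re_sum]
  congr 1
  refine Finset.sum_congr rfl fun j _ => ?_
  rw [_root_.smul_apply, map_smul, inner_smul_right, Complex.re_ofReal_mul]

lemma sum_dPart {V : Type} {r : ℕ} (g : V → Fin r) {ρ : Hs V →L[ℂ] Hs V} {F : Finset V}
    (h : Adm ρ F) : ∑ j, dPart g ρ j = TT ρ 1 := by
  simp only [dPart_eq g h, TT_eq h]
  rw [Finset.sum_comm]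
  simp

lemma exists_symm_sqrt {H : Type*} [NormedAddCommGroup H] [InnerProductSpace ℂ H]
    [CompleteSpace H] {ρ : H →L[ℂ] H} (hρ : ρ.IsPositive) :
    ∃ s : H →L[ℂ] H, (∀ x y : H, ⟪s x, y⟫ = ⟪x, s y⟫) ∧ ∀ x, ρ x = s (s x) := by
  have hρ' : 0 ≤ ρ := (ContinuousLinearMap.nonneg_iff_isPositive ρ).2 hρ
  have hss : CFC.sqrt ρ * CFC.sqrt ρ = ρ := CFC.sqrt_mul_sqrt_self ρ hρ'
  have hs0 : 0 ≤ CFC.sqrt ρ := CFC.sqrt_nonneg ρ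
  exact ⟨CFC.sqrt ρ, ((ContinuousLinearMap.isPositive_iff _).1
    ((ContinuousLinearMap.nonneg_iff_isPositive _).1 hs0)).1, fun x => by
      conv_lhs => rw [← hss]
      rfl⟩

/-- A finitely supported positive operator acts in the trace pairing as a finite sum of rank-one
operators: the vectors are the columns `s e_w` of its positive square root `s`, which has the same
support. -/
lemma Adm.exists_vectors {V : Type} {ρ : Hs V →L[ℂ] Hs V} {F : Finset V} (h : Adm ρ F) :
    ∃ y : V → Hs V, ∀ b : Hs V →L[ℂ] Hs V, TT ρ b = ∑ w ∈ F, (⟪y w, b (y w)⟫).re := by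
  obtain ⟨s, hsym, hap⟩ := exists_symm_sqrt h.isPositive
  have hsF : ∀ v ∉ F, s (bas V v) = 0 := fun v hv => by
    rw [← inner_self_eq_zero (𝕜 := ℂ), hsym, ← hap, h.2 v hv, inner_zero_right]
  refine ⟨fun w => s (bas V w), fun b => ?_⟩
  have hexp : ∀ w, s (bas V w) = ∑ v ∈ F, ⟪bas V v, s (bas V w)⟫ • bas V v := fun w => by
    simp only [inner_bas]
    refine eq_sum_bas F _ fun v hv => ?_
    rw [← inner_bas, ← hsym, hsF v hv, inner_zero_left]
  -- both sides equal `∑ v w, ⟪e_v, s e_w⟫ ⟪s e_w, b e_v⟫`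
  have h1 : ∀ v, ⟪bas V v, ρ (b (bas V v))⟫
      = ∑ w ∈ F, ⟪bas V v, s (bas V w)⟫ * ⟪s (bas V w), b (bas V v)⟫ := fun v => by
    rw [hap, ← hsym, hexp v, sum_inner]
    refine Finset.sum_congr rfl fun w _ => ?_
    rw [inner_smul_left, inner_conj_symm, hsym (bas V v), hsym (bas V w)]
  have h2 : ∀ w, ⟪s (bas V w), b (s (bas V w))⟫
      = ∑ v ∈ F, ⟪bas V v, s (bas V w)⟫ * ⟪s (bas V w), b (bas V v)⟫ := fun w => by
    have hb : b (s (bas V w)) = ∑ v ∈ F, ⟪bas V v, s (bas V w)⟫ • b (bas V v) := by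
      conv_lhs => rw [hexp w]
      simp only [map_sum, map_smul]
    rw [hb, inner_sum]
    simp only [inner_smul_right]
  rw [TT_eq h]
  simp only [h1, h2, Complex.re_sum]
  exact Finset.sum_comm

lemma TT_rankOne {V : Type} {F : Finset V} {y : Hs V} (hy : ∀ v ∉ F, y v = 0)
    (b : Hs V →L[ℂ] Hs V) :
    TT (InnerProductSpace.rankOne ℂ y y) b = (⟪y, b y⟫).re := by
  rw [TT_eq (Adm.rankOne hy), ← Complex.re_sum]
  congr 1
  have h : b y = ∑ v ∈ F, y v • b (bas V v) := by
    conv_lhs => rw [eq_sum_bas F y hy]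
    simp
  rw [h, inner_sum]
  refine Finset.sum_congr rfl fun v _ => ?_
  rw [InnerProductSpace.rankOne_apply, inner_smul_right, inner_smul_right, inner_bas, mul_comm]

/-! ### The largest spectral value -/

lemma re_inner_le {V : Type} (b : Hs V →L[ℂ] Hs V) (x : Hs V) :
    (⟪x, b x⟫).re ≤ ‖b‖ * ‖x‖ ^ 2 :=
  calc (⟪x, b x⟫).re ≤ ‖⟪x, b x⟫‖ := Complex.re_le_norm _
    _ ≤ ‖x‖ * ‖b x‖ := norm_inner_le_norm _ _
    _ ≤ ‖x‖ * (‖b‖ * ‖x‖) := by gcongr; exact b.le_opNorm x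
    _ = _ := by ring

lemma re_inner_le_lamMax {V : Type} (b : Hs V →L[ℂ] Hs V) (x : Hs V) :
    (⟪x, b x⟫).re ≤ lamMax b * ‖x‖ ^ 2 := by
  rcases eq_or_ne x 0 with rfl | hx
  · simp
  have hn : 0 < ‖x‖ := norm_pos_iff.2 hx
  have hbd : BddAbove {t : ℝ | ∃ x : Hs V, ‖x‖ = 1 ∧ t = (⟪x, b x⟫).re} := by
    refine ⟨‖b‖, ?_⟩
    rintro t ⟨x, hx, rfl⟩
    simpa [hx] using re_inner_le b x
  have h : (⟪((‖x‖⁻¹ : ℝ) : ℂ) • x, b (((‖x‖⁻¹ : ℝ) : ℂ) • x)⟫).re ≤ lamMax b := by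
    refine le_csSup hbd ⟨_, ?_, rfl⟩
    rw [norm_smul, Complex.norm_real, norm_inv, norm_norm, inv_mul_cancel₀ hn.ne']
  rw [map_smul, inner_smul_left, inner_smul_right, Complex.conj_ofReal, Complex.re_ofReal_mul,
    Complex.re_ofReal_mul] at h
  have h3 := mul_le_mul_of_nonneg_right h (sq_nonneg ‖x‖)
  calc (⟪x, b x⟫).re = ‖x‖⁻¹ * (‖x‖⁻¹ * (⟪x, b x⟫).re) * ‖x‖ ^ 2 := by field_simp
    _ ≤ _ := h3

lemma Adm.TT_le {V : Type} {ρ : Hs V →L[ℂ] Hs V} {F : Finset V} (h : Adm ρ F)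
    (b : Hs V →L[ℂ] Hs V) : TT ρ b ≤ lamMax b * TT ρ 1 := by
  obtain ⟨y, hy⟩ := h.exists_vectors
  rw [hy, hy, Finset.mul_sum]
  refine Finset.sum_le_sum fun w _ => (re_inner_le_lamMax b (y w)).trans_eq ?_
  congr 1
  rw [one_apply_eq_self, inner_self_eq_norm_sq_to_K]
  norm_cast

/-- It suffices to bound the quadratic form on finitely supported vectors, which are dense. -/
lemma lamMax_le {V : Type} [Nonempty V] (b : Hs V →L[ℂ] Hs V) (q : ℝ)
    (h : ∀ (F : Finset V) (y : Hs V), (∀ v ∉ F, y v = 0) → (⟪y, b y⟫).re ≤ q * ‖y‖ ^ 2) :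
    lamMax b ≤ q := by
  classical
  refine csSup_le ?_ ?_
  · obtain ⟨v⟩ := ‹Nonempty V›
    exact ⟨_, bas V v, norm_bas v, rfl⟩
  rintro t ⟨x, hx, rfl⟩
  have hmem : x ∈ {y : Hs V | (⟪y, b y⟫).re ≤ q * ‖y‖ ^ 2} := by
    refine IsClosed.mem_of_tendsto (b := Filter.atTop) ?_ (hasSum_bas x)
      (Filter.Eventually.of_forall fun F => ?_)
    · exact isClosed_le (Complex.continuous_re.comp (continuous_id.inner b.continuous))
        (by fun_prop)
    · refine h F _ fun v hv => ?_
      rw [lp.coeFn_sum, Finset.sum_apply]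
      refine Finset.sum_eq_zero fun w hw => ?_
      have : w ≠ v := fun e => hv (e ▸ hw)
      simp [bas_apply, this]
  simpa [hx] using hmem

/-! ### Weak duality, correction to feasibility, and separation -/

/-- Weak duality: a feasible value of the primal problem is at most one of the dual problem. -/
lemma weak_duality {V : Type} {r : ℕ} (hr : 1 ≤ r) {g : V → Fin r}
    {I : Fin r → (Hs V →L[ℂ] Hs V)}
    (hI : ∀ (j : Fin r) (v : V), I j (bas V v) = if g v = j then bas V v else 0)
    (a : Hs V →L[ℂ] Hs V) {ρ : Hs V →L[ℂ] Hs V} {F : Finset V} (h : Adm ρ F)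
    (hd : ∀ j, dPart g ρ j = 1 / (r : ℝ)) {ζ : Fin r → ℝ} (hζ : ∑ j, ζ j = 0) :
    TT ρ a ≤ lamMax (a + ∑ j : Fin r, (ζ j : ℂ) • I j) := by
  have hr0 : (r : ℝ) ≠ 0 := by positivity
  have h1 := h.TT_le (a + ∑ j : Fin r, (ζ j : ℂ) • I j)
  rw [TT_combination h, ← sum_dPart g h] at h1
  simp only [← dPart_eq_TT hI, hd, ← Finset.sum_mul, hζ] at h1
  simpa [hr0] using h1

/-- Adding nonnegative multiples of diagonal rank-one operators `|e_{v j}⟩⟨e_{v j}|`. -/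
lemma Adm.exists_add_diag {V : Type} {r : ℕ} {ρ : Hs V →L[ℂ] Hs V} {F : Finset V} (h : Adm ρ F)
    (v : Fin r → V) {c : Fin r → ℝ} (hc : ∀ j, 0 ≤ c j) :
    ∃ (σ : Hs V →L[ℂ] Hs V) (G : Finset V), Adm σ G ∧ ∀ b : Hs V →L[ℂ] Hs V,
      TT σ b = TT ρ b + ∑ j, c j * (⟪bas V (v j), b (bas V (v j))⟫).re := by
  classical
  set G : Finset V := F ∪ Finset.univ.image v
  have hv : ∀ j, ∀ w ∉ G, (bas V (v j) : Hs V) w = 0 := fun j w hw => by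
    rw [bas_apply, if_neg]
    rintro rfl
    exact hw (Finset.mem_union_right _ (Finset.mem_image_of_mem _ (Finset.mem_univ j)))
  have h1 := h.mono (G := G) Finset.subset_union_left
  have h2 : ∀ j ∈ (Finset.univ : Finset (Fin r)),
      Adm ((c j : ℂ) • InnerProductSpace.rankOne ℂ (bas V (v j)) (bas V (v j))) G :=
    fun j _ => (Adm.rankOne (hv j)).smul (hc j)
  refine ⟨_, G, h1.add (Adm.sum _ h2), fun b => ?_⟩
  rw [TT_add_left h1 (Adm.sum _ h2), TT_sum_left _ h2]
  congr 1
  refine Finset.sum_congr rfl fun j _ => ?_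
  rw [TT_smul_left, TT_rankOne (hv j)]

lemma re_inner_bas_proj {V : Type} {r : ℕ} {g : V → Fin r} {I : Fin r → (Hs V →L[ℂ] Hs V)}
    (hI : ∀ (j : Fin r) (v : V), I j (bas V v) = if g v = j then bas V v else 0)
    (v : V) (j : Fin r) : (⟪bas V v, I j (bas V v)⟫).re = if g v = j then 1 else 0 := by
  rw [hI]
  split_ifs
  · rw [inner_self_eq_norm_sq_to_K, norm_bas]
    simp
  · simp

/-- If the partial traces of `ρ` are within `δ` of `1/r`, then `ρ` can be shrunk by the factor
`1 / (1 + r δ)` and completed by a diagonal operator to a feasible one, so its value exceeds the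
primal bound `p` by at most a multiple of `δ`. -/
lemma near_feasible {V : Type} {r : ℕ} (hr : 1 ≤ r) {g : V → Fin r}
    (hg : ∀ j : Fin r, ∃ v : V, g v = j) {I : Fin r → (Hs V →L[ℂ] Hs V)}
    (hI : ∀ (j : Fin r) (v : V), I j (bas V v) = if g v = j then bas V v else 0)
    (a : Hs V →L[ℂ] Hs V) {p : ℝ}
    (hp : ∀ (ρ : Hs V →L[ℂ] Hs V) (F : Finset V), Adm ρ F →
      (∀ j, dPart g ρ j = 1 / (r : ℝ)) → TT ρ a ≤ p)
    {ρ : Hs V →L[ℂ] Hs V} {F : Finset V} (h : Adm ρ F) {δ : ℝ} (hδ : 0 < δ)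
    (hd : ∀ j, |dPart g ρ j - 1 / (r : ℝ)| ≤ δ) :
    TT ρ a ≤ p + δ * (r * (p + 2 * ‖a‖)) := by
  choose v hv using hg
  have hr0 : (0 : ℝ) < r := by exact_mod_cast hr
  have hm : 0 < 1 + r * δ := by positivity
  set l : ℝ := 1 / (1 + r * δ) with hl
  have hl0 : 0 < l := by positivity
  have hlm : l * (1 + r * δ) = 1 := by rw [hl]; field_simp
  set c : Fin r → ℝ := fun j => 1 / (r : ℝ) - l * dPart g ρ j with hcdef
  have hc : ∀ j, 0 ≤ c j := fun j => by
    have h1 : dPart g ρ j ≤ 1 / r + δ := by linarith [(abs_le.1 (hd j)).2]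
    have h2 : l * dPart g ρ j ≤ l * (1 / r + δ) := by gcongr
    have h3 : l * (1 / r + δ) = 1 / r := by
      have : (1 / r + δ : ℝ) = (1 + r * δ) * (1 / r) := by field_simp
      rw [this, ← mul_assoc, hlm, one_mul]
    simp only [hcdef]
    linarith
  obtain ⟨σ, G, hσ, hTT⟩ := (h.smul hl0.le).exists_add_diag v hc
  have hfeas : ∀ j, dPart g σ j = 1 / (r : ℝ) := fun j => by
    rw [dPart_eq_TT hI, hTT, TT_smul_left, ← dPart_eq_TT hI]
    simp [re_inner_bas_proj hI, hv, hcdef]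
  have hval := hp σ G hσ hfeas
  rw [hTT, TT_smul_left] at hval
  have hlow : ∑ j, c j * (-‖a‖) ≤ ∑ j, c j * (⟪bas V (v j), a (bas V (v j))⟫).re := by
    refine Finset.sum_le_sum fun j _ => mul_le_mul_of_nonneg_left ?_ (hc j)
    have := re_inner_le (-a) (bas V (v j))
    simp only [_root_.neg_apply, inner_neg_right, Complex.neg_re, norm_neg, norm_bas] at this
    linarith
  have hsum : ∑ j, c j = 1 - l * ∑ j, dPart g ρ j := by
    simp only [hcdef, Finset.sum_sub_distrib, ← Finset.mul_sum]
    simp [hr0.ne']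
  have hdsum : 1 - r * δ ≤ ∑ j, dPart g ρ j := by
    have : ∑ _j : Fin r, (1 / (r : ℝ) - δ) ≤ ∑ j, dPart g ρ j :=
      Finset.sum_le_sum fun j _ => by linarith [(abs_le.1 (hd j)).1]
    refine le_trans (le_of_eq ?_) this
    simp
    field_simp
  rw [← Finset.sum_mul, hsum] at hlow
  have h1 : l * TT ρ a ≤ p + (1 - l * ∑ j, dPart g ρ j) * ‖a‖ := by linarith
  have h2 := mul_le_mul_of_nonneg_left h1 hm.le
  have h3 : (1 + r * δ) * (l * TT ρ a) = TT ρ a := by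
    rw [← mul_assoc, mul_comm (1 + r * δ), hlm, one_mul]
  have h4 : (1 + r * δ) * (p + (1 - l * ∑ j, dPart g ρ j) * ‖a‖)
      = (1 + r * δ) * p + ((1 + r * δ) - ∑ j, dPart g ρ j) * ‖a‖ := by
    linear_combination (-(∑ j, dPart g ρ j) * ‖a‖) * hlm
  rw [h3, h4] at h2
  have h5 : ((1 + r * δ) - ∑ j, dPart g ρ j) * ‖a‖ ≤ (2 * r * δ) * ‖a‖ := by
    gcongr
    linarith
  linarith

/-- The attainable pairs `((d_j(ρ))_j, T(ρ, a))`, a convex cone in `ℝ^r × ℝ`. -/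
def attain {V : Type} {r : ℕ} (g : V → Fin r) (a : Hs V →L[ℂ] Hs V) : Set ((Fin r → ℝ) × ℝ) :=
  {z | ∃ (ρ : Hs V →L[ℂ] Hs V) (F : Finset V), Adm ρ F ∧ z = (dPart g ρ, TT ρ a)}

lemma convex_attain {V : Type} {r : ℕ} {g : V → Fin r} {I : Fin r → (Hs V →L[ℂ] Hs V)}
    (hI : ∀ (j : Fin r) (v : V), I j (bas V v) = if g v = j then bas V v else 0)
    (a : Hs V →L[ℂ] Hs V) : Convex ℝ (attain g a) := by
  classical
  rintro _ ⟨ρ, F, h, rfl⟩ _ ⟨σ, G, h', rfl⟩ s t hs ht -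
  have h1 := (h.mono (Finset.subset_union_left (s₂ := G))).smul hs
  have h2 := (h'.mono (Finset.subset_union_right (s₁ := F))).smul ht
  refine ⟨_, _, h1.add h2, ?_⟩
  have key : ∀ b, TT ((s : ℂ) • ρ + (t : ℂ) • σ) b = s * TT ρ b + t * TT σ b := fun b => by
    rw [TT_add_left h1 h2, TT_smul_left, TT_smul_left]
  refine Prod.ext ?_ ?_
  · funext j
    change s * dPart g ρ j + t * dPart g σ j = dPart g ((s : ℂ) • ρ + (t : ℂ) • σ) j
    simp only [dPart_eq_TT hI, key]
  · exact (key a).symm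

lemma notMem_closure_attain {V : Type} {r : ℕ} (hr : 1 ≤ r) {g : V → Fin r}
    (hg : ∀ j : Fin r, ∃ v : V, g v = j) {I : Fin r → (Hs V →L[ℂ] Hs V)}
    (hI : ∀ (j : Fin r) (v : V), I j (bas V v) = if g v = j then bas V v else 0)
    (a : Hs V →L[ℂ] Hs V) {p q : ℝ}
    (hp : ∀ (ρ : Hs V →L[ℂ] Hs V) (F : Finset V), Adm ρ F →
      (∀ j, dPart g ρ j = 1 / (r : ℝ)) → TT ρ a ≤ p) (hpq : p < q) :
    ((fun _ => 1 / (r : ℝ), q) : (Fin r → ℝ) × ℝ) ∉ closure (attain g a) := by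
  intro hmem
  set K : ℝ := r * (p + 2 * ‖a‖)
  set δ : ℝ := (q - p) / (|K| + 2) with hδdef
  have hK : 0 < |K| + 2 := by positivity
  have hδ : 0 < δ := div_pos (by linarith) hK
  obtain ⟨_, ⟨ρ, F, h, rfl⟩, hdist⟩ := Metric.mem_closure_iff.1 hmem δ hδ
  rw [Prod.dist_eq, max_lt_iff] at hdist
  have hd : ∀ j, |dPart g ρ j - 1 / (r : ℝ)| ≤ δ := fun j => by
    have := (dist_le_pi_dist (fun _ => 1 / (r : ℝ)) (dPart g ρ) j).trans hdist.1.le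
    rwa [Real.dist_eq, abs_sub_comm] at this
  have h1 := near_feasible hr hg hI a hp h hδ hd
  have h2 : q - TT ρ a < δ := lt_of_le_of_lt (le_abs_self _) hdist.2
  have h3 : δ * K ≤ δ * |K| := by gcongr; exact le_abs_self K
  have h4 : δ * (|K| + 2) = q - p := by rw [hδdef]; field_simp
  have h5 : TT ρ a ≤ p + δ * K := h1
  linarith

/-- The dual point obtained by separating `(1/r, …, 1/r, q)` from the closure of the attainable
cone. The coefficient `τ` of the last coordinate is positive because the separating inequality
holds for a feasible operator; the other coefficients, divided by `τ` and centred, give `ζ`. -/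
lemma exists_dual {V : Type} [Nonempty V] {r : ℕ} (hr : 1 ≤ r) {g : V → Fin r}
    (hg : ∀ j : Fin r, ∃ v : V, g v = j) {I : Fin r → (Hs V →L[ℂ] Hs V)}
    (hI : ∀ (j : Fin r) (v : V), I j (bas V v) = if g v = j then bas V v else 0)
    (a : Hs V →L[ℂ] Hs V) {p q : ℝ}
    (hp : ∀ (ρ : Hs V →L[ℂ] Hs V) (F : Finset V), Adm ρ F →
      (∀ j, dPart g ρ j = 1 / (r : ℝ)) → TT ρ a ≤ p)
    {ρ₀ : Hs V →L[ℂ] Hs V} {F₀ : Finset V} (h₀ : Adm ρ₀ F₀)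
    (hd₀ : ∀ j, dPart g ρ₀ j = 1 / (r : ℝ)) (hpq : p < q) :
    ∃ ζ : Fin r → ℝ, ∑ j, ζ j = 0 ∧ lamMax (a + ∑ j : Fin r, (ζ j : ℂ) • I j) ≤ q := by
  have hr0 : (0 : ℝ) < r := by exact_mod_cast hr
  obtain ⟨f, u, hfu, huf⟩ := geometric_hahn_banach_closed_point (convex_attain hI a).closure
    isClosed_closure (notMem_closure_attain hr hg hI a hp hpq)
  set τ : ℝ := f (0, 1) with hτ
  set η : Fin r → ℝ := fun j => f (Pi.single j 1, 0) with hη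
  have hf : ∀ (s : Fin r → ℝ) (t : ℝ), f (s, t) = ∑ j, s j * η j + t * τ := fun s t => by
    have hst : (s, t) = ∑ j, s j • ((Pi.single j 1, 0) : (Fin r → ℝ) × ℝ)
        + t • ((0, 1) : (Fin r → ℝ) × ℝ) := by
      refine Prod.ext ?_ ?_
      · funext i
        simp [Prod.fst_sum, Finset.sum_apply, Pi.single_apply]
      · simp [Prod.snd_sum]
    rw [hst, map_add, map_sum]
    simp only [map_smul, smul_eq_mul, hη, hτ]
  have hall : ∀ (ρ : Hs V →L[ℂ] Hs V) (F : Finset V), Adm ρ F →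
      ∑ j, dPart g ρ j * η j + TT ρ a * τ < ∑ j, (1 / (r : ℝ)) * η j + q * τ :=
    fun ρ F h => by
      rw [← hf, ← hf]
      exact (hfu _ (subset_closure ⟨ρ, F, h, rfl⟩)).trans huf
  have hτ0 : 0 < τ := by
    have h1 := hall ρ₀ F₀ h₀
    simp only [hd₀] at h1
    have h2 : 0 < (q - TT ρ₀ a) * τ := by linarith
    have h3 : 0 < q - TT ρ₀ a := by linarith [hp ρ₀ F₀ h₀ hd₀]
    exact pos_of_mul_pos_right h2 h3.le
  set m : ℝ := ∑ j, (1 / (r : ℝ)) * η j with hm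
  refine ⟨fun j => (η j - m) / τ, ?_, ?_⟩
  · rw [← Finset.sum_div, Finset.sum_sub_distrib, hm, ← Finset.mul_sum]
    simp [hr0.ne']
  refine lamMax_le _ q fun F y hy => ?_
  rcases eq_or_ne y 0 with rfl | hy0
  · simp
  -- the separating inequality is applied to the rank-one operator of `y / ‖y‖`
  have hn : 0 < ‖y‖ := norm_pos_iff.2 hy0
  have hA := Adm.rankOne hy
  have hA' := hA.smul (inv_nonneg.2 (sq_nonneg ‖y‖))
  have h1 := hall _ F hA'
  have htr : ∑ j, dPart g (InnerProductSpace.rankOne ℂ y y) j = ‖y‖ ^ 2 := by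
    rw [sum_dPart g hA, TT_rankOne hy, one_apply_eq_self, inner_self_eq_norm_sq_to_K]
    norm_cast
  rw [← TT_rankOne hy, TT_combination hA]
  simp only [dPart_eq_TT hI, TT_smul_left] at h1 htr
  generalize TT (InnerProductSpace.rankOne ℂ y y) a = A at h1 ⊢
  generalize hB : (fun j => TT (InnerProductSpace.rankOne ℂ y y) (I j)) = B
  replace hB : ∀ j, TT (InnerProductSpace.rankOne ℂ y y) (I j) = B j := fun j => congrFun hB j
  simp only [hB] at h1 htr ⊢
  have hn2 : 0 < ‖y‖ ^ 2 := by positivity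
  have h2 : ∑ j, B j * η j + A * τ < ‖y‖ ^ 2 * (m + q * τ) := by
    have h3 := mul_lt_mul_of_pos_left h1 hn2
    refine lt_of_eq_of_lt ?_ h3
    rw [mul_add, Finset.mul_sum]
    congr 1
    · refine Finset.sum_congr rfl fun j _ => ?_
      field_simp
    · field_simp
  have h4 : ∑ j, (η j - m) / τ * B j = (∑ j, B j * η j - m * ‖y‖ ^ 2) / τ := by
    rw [← htr, Finset.mul_sum, ← Finset.sum_sub_distrib, Finset.sum_div]
    exact Finset.sum_congr rfl fun j _ => by ring
  rw [h4]
  have h5 : (∑ j, B j * η j - m * ‖y‖ ^ 2) / τ ≤ q * ‖y‖ ^ 2 - A := by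
    rw [div_le_iff₀ hτ0]
    linarith
  linarith

/-- Strong duality: the primal supremum equals the dual infimum. -/
theorem stmt7 (r : ℕ) (hr : 1 ≤ r) (V : Type) [Countable V] [Nonempty V]
    (g : V → Fin r) (hg : ∀ j : Fin r, ∃ v : V, g v = j)
    (a : Hs V →L[ℂ] Hs V) (ha : IsSelfAdjoint a)
    (I : Fin r → (Hs V →L[ℂ] Hs V))
    (hI : ∀ (j : Fin r) (v : V), I j (bas V v) = if g v = j then bas V v else 0) :
    sSup {t : ℝ | ∃ (ρ : Hs V →L[ℂ] Hs V) (F : Finset V),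
        (∀ x : Hs V, 0 ≤ ⟪x, ρ x⟫) ∧
        (∀ v ∉ F, ρ (bas V v) = 0) ∧
        (∀ j : Fin r, dPart g ρ j = 1 / (r : ℝ)) ∧
        t = TT ρ a}
      = sInf {t : ℝ | ∃ ζ : Fin r → ℝ, (∑ j : Fin r, ζ j = 0) ∧
        t = lamMax (a + ∑ j : Fin r, (ζ j : ℂ) • I j)} := by
  have hr0 : (0 : ℝ) < r := by exact_mod_cast hr
  -- the diagonal operator `∑ j, (1/r) |e_{v j}⟩⟨e_{v j}|` is feasible
  obtain ⟨ρ₀, F₀, h₀, hd₀⟩ : ∃ (ρ : Hs V →L[ℂ] Hs V) (F : Finset V), Adm ρ F ∧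
      ∀ j, dPart g ρ j = 1 / (r : ℝ) := by
    choose v hv using hg
    have h0 : Adm (0 : Hs V →L[ℂ] Hs V) ∅ := ⟨fun x => by simp, fun v _ => by simp⟩
    obtain ⟨σ, G, hσ, hTT⟩ := h0.exists_add_diag v (c := fun _ => 1 / (r : ℝ))
      (fun _ => by positivity)
    refine ⟨σ, G, hσ, fun j => ?_⟩
    have hz : TT (0 : Hs V →L[ℂ] Hs V) (I j) = 0 := by simp [TT]
    rw [dPart_eq_TT hI, hTT, hz]
    simp [re_inner_bas_proj hI, hv]
  have hweak : ∀ t ∈ {t : ℝ | ∃ (ρ : Hs V →L[ℂ] Hs V) (F : Finset V),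
        (∀ x : Hs V, 0 ≤ ⟪x, ρ x⟫) ∧
        (∀ v ∉ F, ρ (bas V v) = 0) ∧
        (∀ j : Fin r, dPart g ρ j = 1 / (r : ℝ)) ∧
        t = TT ρ a}, ∀ ζ : Fin r → ℝ, ∑ j, ζ j = 0 →
        t ≤ lamMax (a + ∑ j : Fin r, (ζ j : ℂ) • I j) := by
    rintro _ ⟨ρ, F, hpos, hsupp, hd, rfl⟩ ζ hζ
    exact weak_duality hr hI a ⟨hpos, hsupp⟩ hd hζ
  have hmem₀ : TT ρ₀ a ∈ {t : ℝ | ∃ (ρ : Hs V →L[ℂ] Hs V) (F : Finset V),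
        (∀ x : Hs V, 0 ≤ ⟪x, ρ x⟫) ∧
        (∀ v ∉ F, ρ (bas V v) = 0) ∧
        (∀ j : Fin r, dPart g ρ j = 1 / (r : ℝ)) ∧
        t = TT ρ a} := ⟨ρ₀, F₀, h₀.1, h₀.2, hd₀, rfl⟩
  apply le_antisymm
  · refine csSup_le ⟨_, hmem₀⟩ fun t ht => le_csInf ⟨_, 0, by simp, rfl⟩ ?_
    rintro _ ⟨ζ, hζ, rfl⟩
    exact hweak t ht ζ hζ
  · refine le_of_forall_gt_imp_ge_of_dense fun q hq => ?_
    obtain ⟨ζ, hζ, hle⟩ := exists_dual hr hg hI a (fun ρ F h hd => by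
      exact le_csSup ⟨_, fun t ht => hweak t ht 0 (by simp)⟩ ⟨ρ, F, h.1, h.2, hd, rfl⟩) h₀ hd₀ hq
    refine le_trans (csInf_le ⟨TT ρ₀ a, ?_⟩ ⟨ζ, hζ, rfl⟩) hle
    rintro _ ⟨ξ, hξ, rfl⟩
    exact hweak _ hmem₀ ξ hξ
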